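/- arXiv:1905.04758 — 2 statements merged into one kernel-verified Lean document; each statement's English description precedes it below -/
import Mathlib

section
/- Suppose A has the Poisson distribution with parameter λ > 0, i.e., ℙ[A = k] = e^{−λ} λ^k / k! for k ∈ ℕ. Then E[X²] < ∞ if and only if λ < (√5 − 1)/2 (equivalently λ² + λ < 1), and in that case Var(X) = −λ / ((λ − 1)² (λ² + λ − 1)). -/
open MeasureTheory ProbabilityTheory ENNReal
open scoped NNReal

/-!
Expanding `X =_d A * X + 1` with independence gives `E[X] = E[A] E[X] + 1` and
`E[X²] = E[A²] E[X²] + 2 E[A] E[X] + 1` in `[0, ∞]`. If `E[X²]` is finite, the second identity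
forces `E[A²] < 1`. For the converse, an integer `A` satisfies
`min (A * X + 1) n ≤ A * min X n + 1`, so the truncated moments of `X`, which are finite, satisfy
the same relations as inequalities; when `E[A] ≤ E[A²] < 1` this bounds them uniformly in `n`.
Solving for the moments gives `Var(X) = Var(A) / ((1 - E[A])² (1 - E[A²]))`, and a Poisson variable
has `E[A] = λ` and `E[A²] = λ (λ + 1)`.
-/

section AffineEquation

variable {m c d : ℝ≥0∞}

lemma le_div_one_sub_of_le_mul_add (hm : m ≠ ⊤) (hc : c < 1) (h : m ≤ c * m + d) :
    m ≤ d / (1 - c) := by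
  rw [ENNReal.le_div_iff_mul_le (.inl (tsub_pos_of_lt hc).ne') (.inl (by finiteness)),
    ENNReal.mul_sub fun _ _ ↦ hm, mul_one, tsub_le_iff_left, mul_comm m c]
  exact h

lemma eq_div_one_sub_of_eq_mul_add (hm : m ≠ ⊤) (hc : c < 1) (h : m = c * m + d) :
    m = d / (1 - c) := by
  refine (le_div_one_sub_of_le_mul_add hm hc h.le).antisymm (ENNReal.div_le_of_le_mul ?_)
  rw [ENNReal.mul_sub fun _ _ ↦ hm, mul_one, mul_comm m c]
  exact ENNReal.le_sub_of_add_le_left (by finiteness) h.ge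

lemma lt_one_of_eq_mul_add (hm : m ≠ ⊤) (hd : d ≠ 0) (h : m = c * m + d) : c < 1 := by
  by_contra! hc
  have : m + d ≤ m := calc
    m + d ≤ c * m + d := by gcongr; exact le_mul_of_one_le_left' hc
    _ = m := h.symm
  exact (ENNReal.lt_add_right hm hd).not_ge this

end AffineEquation

section Moments

variable {Ω : Type*} [MeasurableSpace Ω] {P : Measure Ω}

lemma lintegral_natCast_le_lintegral_sq (X : Ω → ℕ) :
    ∫⁻ ω, (X ω : ℝ≥0∞) ∂P ≤ ∫⁻ ω, (X ω : ℝ≥0∞) ^ 2 ∂P := by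
  gcongr with ω
  exact_mod_cast Nat.le_self_pow two_ne_zero (X ω)

lemma lintegral_comp_eq_iSup_lintegral_min {X : Ω → ℕ} (hX : AEMeasurable X P) {f : ℕ → ℝ≥0∞}
    (hf : Monotone f) : ∫⁻ ω, f (X ω) ∂P = ⨆ n, ∫⁻ ω, f (min (X ω) n) ∂P := by
  have hsup (x : ℕ) : ⨆ n, f (min x n) = f x :=
    le_antisymm (iSup_le fun n ↦ hf (min_le_left x n)) (le_iSup_of_le x (by rw [min_self]))
  have hmeas (n : ℕ) : AEMeasurable (fun ω ↦ f (min (X ω) n)) P :=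
    (Measurable.of_discrete (f := fun x ↦ f (min x n))).comp_aemeasurable hX
  have hmono (ω : Ω) : Monotone fun n ↦ f (min (X ω) n) :=
    fun _ _ hnk ↦ hf (min_le_min_left (X ω) hnk)
  simp_rw [← lintegral_iSup' hmeas (.of_forall hmono), hsup]

variable [IsProbabilityMeasure P]

lemma lintegral_mul_add_one {U V : Ω → ℝ≥0∞} (hU : AEMeasurable U P) (hV : AEMeasurable V P)
    (hUV : IndepFun U V P) :
    ∫⁻ ω, (U ω * V ω + 1) ∂P = (∫⁻ ω, U ω ∂P) * ∫⁻ ω, V ω ∂P + 1 := by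
  rw [lintegral_add_right _ measurable_const,
    lintegral_mul_eq_lintegral_mul_lintegral_of_indepFun'' hU hV hUV, lintegral_one, measure_univ]

lemma lintegral_mul_add_one_sq {U V : Ω → ℝ≥0∞} (hU : AEMeasurable U P) (hV : AEMeasurable V P)
    (hUV : IndepFun U V P) :
    ∫⁻ ω, (U ω * V ω + 1) ^ 2 ∂P =
      (∫⁻ ω, U ω ^ 2 ∂P) * ∫⁻ ω, V ω ^ 2 ∂P + (2 * ((∫⁻ ω, U ω ∂P) * ∫⁻ ω, V ω ∂P) + 1) := by
  have hexp (ω : Ω) : (U ω * V ω + 1) ^ 2 = U ω ^ 2 * V ω ^ 2 + (2 * (U ω * V ω) + 1) := by ring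
  have hsq : IndepFun (fun ω ↦ U ω ^ 2) (fun ω ↦ V ω ^ 2) P :=
    hUV.comp (measurable_id.pow_const 2) (measurable_id.pow_const 2)
  simp_rw [hexp]
  rw [lintegral_add_left' (by fun_prop), lintegral_add_right _ measurable_const,
    lintegral_const_mul'' _ (by fun_prop), lintegral_one, measure_univ,
    lintegral_mul_eq_lintegral_mul_lintegral_of_indepFun'' hU hV hUV,
    lintegral_mul_eq_lintegral_mul_lintegral_of_indepFun'' (hU.pow_const 2) (hV.pow_const 2) hsq]

end Moments

/-- `X` is a perpetuity with integer discount factor `A` and unit payments: `A` and `X` are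
independent and `X` has the same law as `A * X + 1`. The measurability of `X` is part of
`identDistrib`. -/
structure IsPerpetuity {Ω : Type*} [MeasurableSpace Ω] (A X : Ω → ℕ) (P : Measure Ω) : Prop where
  aemeasurable : AEMeasurable A P
  indepFun : IndepFun A X P
  identDistrib : IdentDistrib X (fun ω ↦ A ω * X ω + 1) P P

lemma min_mul_add_le_mul_min_add (a b x n : ℕ) : min (a * x + b) n ≤ a * min x n + b := by
  rcases Nat.eq_zero_or_pos a with rfl | ha
  · simp
  · rcases le_total x n with hxn | hnx
    · rw [min_eq_left hxn]
      exact min_le_left _ _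
    · rw [min_eq_right hnx]
      exact (min_le_right _ _).trans (le_add_right (Nat.le_mul_of_pos_left n ha))

namespace IsPerpetuity

variable {Ω : Type*} [MeasurableSpace Ω] {P : Measure Ω} {A X : Ω → ℕ}

lemma indepFun_natCast_comp (h : IsPerpetuity A X P) (g : ℕ → ℕ) :
    IndepFun (fun ω ↦ (A ω : ℝ≥0∞)) (fun ω ↦ (g (X ω) : ℝ≥0∞)) P :=
  h.indepFun.comp (φ := fun a : ℕ ↦ (a : ℝ≥0∞)) (ψ := fun x ↦ (g x : ℝ≥0∞))
    .of_discrete .of_discrete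

lemma lintegral_comp_eq (h : IsPerpetuity A X P) (f : ℕ → ℝ≥0∞) :
    ∫⁻ ω, f (X ω) ∂P = ∫⁻ ω, f (A ω * X ω + 1) ∂P :=
  (h.identDistrib.comp (u := f) .of_discrete).lintegral_eq

lemma lintegral_comp_min_le (h : IsPerpetuity A X P) {f : ℕ → ℝ≥0∞} (hf : Monotone f) (n : ℕ) :
    ∫⁻ ω, f (min (X ω) n) ∂P ≤ ∫⁻ ω, f (A ω * min (X ω) n + 1) ∂P := by
  rw [h.lintegral_comp_eq fun x ↦ f (min x n)]
  exact lintegral_mono fun ω ↦ hf (min_mul_add_le_mul_min_add _ _ _ _)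

variable [IsProbabilityMeasure P]

lemma lintegral_comp_le_div_one_sub (h : IsPerpetuity A X P) {f : ℕ → ℝ≥0∞} (hf : Monotone f)
    (hf_top : ∀ n, f n ≠ ⊤) {c d : ℝ≥0∞} (hc : c < 1)
    (hcontr : ∀ n, ∫⁻ ω, f (A ω * min (X ω) n + 1) ∂P ≤ c * ∫⁻ ω, f (min (X ω) n) ∂P + d) :
    ∫⁻ ω, f (X ω) ∂P ≤ d / (1 - c) := by
  rw [lintegral_comp_eq_iSup_lintegral_min h.identDistrib.aemeasurable_fst hf]
  refine iSup_le fun n ↦ le_div_one_sub_of_le_mul_add ?_ hc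
    ((h.lintegral_comp_min_le hf n).trans (hcontr n))
  have hbound : ∫⁻ ω, f (min (X ω) n) ∂P ≤ f n := calc
    _ ≤ ∫⁻ _, f n ∂P := lintegral_mono fun ω ↦ hf (min_le_right (X ω) n)
    _ = f n := by simp
  exact ne_top_of_le_ne_top (hf_top n) hbound

lemma lintegral_mul_comp_add_one (h : IsPerpetuity A X P) (g : ℕ → ℕ) :
    ∫⁻ ω, ((A ω * g (X ω) + 1 : ℕ) : ℝ≥0∞) ∂P =
      (∫⁻ ω, (A ω : ℝ≥0∞) ∂P) * ∫⁻ ω, (g (X ω) : ℝ≥0∞) ∂P + 1 := by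
  push_cast
  exact lintegral_mul_add_one (Measurable.of_discrete.comp_aemeasurable h.aemeasurable)
    ((Measurable.of_discrete (f := fun x ↦ (g x : ℝ≥0∞))).comp_aemeasurable
      h.identDistrib.aemeasurable_fst)
    (h.indepFun_natCast_comp g)

lemma lintegral_mul_comp_add_one_sq (h : IsPerpetuity A X P) (g : ℕ → ℕ) :
    ∫⁻ ω, ((A ω * g (X ω) + 1 : ℕ) : ℝ≥0∞) ^ 2 ∂P =
      (∫⁻ ω, (A ω : ℝ≥0∞) ^ 2 ∂P) * ∫⁻ ω, (g (X ω) : ℝ≥0∞) ^ 2 ∂P +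
        (2 * ((∫⁻ ω, (A ω : ℝ≥0∞) ∂P) * ∫⁻ ω, (g (X ω) : ℝ≥0∞) ∂P) + 1) := by
  push_cast
  exact lintegral_mul_add_one_sq (Measurable.of_discrete.comp_aemeasurable h.aemeasurable)
    ((Measurable.of_discrete (f := fun x ↦ (g x : ℝ≥0∞))).comp_aemeasurable
      h.identDistrib.aemeasurable_fst)
    (h.indepFun_natCast_comp g)

lemma lintegral_eq_mul_add (h : IsPerpetuity A X P) :
    ∫⁻ ω, (X ω : ℝ≥0∞) ∂P = (∫⁻ ω, (A ω : ℝ≥0∞) ∂P) * ∫⁻ ω, (X ω : ℝ≥0∞) ∂P + 1 :=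
  (h.lintegral_comp_eq (↑)).trans (h.lintegral_mul_comp_add_one id)

lemma lintegral_sq_eq_mul_add (h : IsPerpetuity A X P) :
    ∫⁻ ω, (X ω : ℝ≥0∞) ^ 2 ∂P =
      (∫⁻ ω, (A ω : ℝ≥0∞) ^ 2 ∂P) * ∫⁻ ω, (X ω : ℝ≥0∞) ^ 2 ∂P +
        (2 * ((∫⁻ ω, (A ω : ℝ≥0∞) ∂P) * ∫⁻ ω, (X ω : ℝ≥0∞) ∂P) + 1) :=
  (h.lintegral_comp_eq fun x ↦ (x : ℝ≥0∞) ^ 2).trans (h.lintegral_mul_comp_add_one_sq id)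

theorem lintegral_eq_inv_one_sub (h : IsPerpetuity A X P)
    (hA : ∫⁻ ω, (A ω : ℝ≥0∞) ∂P < 1) :
    ∫⁻ ω, (X ω : ℝ≥0∞) ∂P = (1 - ∫⁻ ω, (A ω : ℝ≥0∞) ∂P)⁻¹ := by
  have hle := h.lintegral_comp_le_div_one_sub Nat.mono_cast ENNReal.natCast_ne_top hA
    fun n ↦ (h.lintegral_mul_comp_add_one (min · n)).le
  have hne_top := ne_top_of_le_ne_top
    (ENNReal.div_ne_top ENNReal.one_ne_top (tsub_pos_of_lt hA).ne') hle
  rw [eq_div_one_sub_of_eq_mul_add hne_top hA h.lintegral_eq_mul_add, one_div]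

theorem lintegral_sq_lt_top_iff (h : IsPerpetuity A X P) :
    ∫⁻ ω, (X ω : ℝ≥0∞) ^ 2 ∂P < ⊤ ↔ ∫⁻ ω, (A ω : ℝ≥0∞) ^ 2 ∂P < 1 := by
  refine ⟨fun hX ↦ lt_one_of_eq_mul_add hX.ne (by simp) h.lintegral_sq_eq_mul_add, fun hA ↦ ?_⟩
  have hA₁ : ∫⁻ ω, (A ω : ℝ≥0∞) ∂P < 1 := (lintegral_natCast_le_lintegral_sq A).trans_lt hA
  have hX₁ : ∫⁻ ω, (X ω : ℝ≥0∞) ∂P ≠ ⊤ := by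
    rw [h.lintegral_eq_inv_one_sub hA₁]
    exact ENNReal.inv_ne_top.2 (tsub_pos_of_lt hA₁).ne'
  have hle := h.lintegral_comp_le_div_one_sub (f := fun x ↦ (x : ℝ≥0∞) ^ 2)
    (d := 2 * ((∫⁻ ω, (A ω : ℝ≥0∞) ∂P) * ∫⁻ ω, (X ω : ℝ≥0∞) ∂P) + 1)
    (fun _ _ hxy ↦ pow_le_pow_left' (Nat.cast_le.2 hxy) 2) (by finiteness) hA fun n ↦ by
      rw [h.lintegral_mul_comp_add_one_sq (min · n)]
      gcongr
      exact min_le_left _ _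
  exact hle.trans_lt (ENNReal.div_lt_top (by finiteness) (tsub_pos_of_lt hA).ne')

end IsPerpetuity

lemma div_sub_sq_inv_one_sub {a b : ℝ≥0} (ha : a < 1) (hb : b < 1) :
    (2 * (a * (1 - a : ℝ≥0∞)⁻¹) + 1) / (1 - b) - (1 - a : ℝ≥0∞)⁻¹ ^ 2 =
      ENNReal.ofReal ((b - a ^ 2) / ((1 - a) ^ 2 * (1 - b))) := by
  have ha' : 0 < 1 - (a : ℝ) := sub_pos.2 ha
  have hb' : 0 < 1 - (b : ℝ) := sub_pos.2 hb
  rw [← ofReal_coe_nnreal, ← ofReal_coe_nnreal, ← ofReal_one, ← ofReal_ofNat 2,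
    ← ofReal_sub _ a.coe_nonneg, ← ofReal_sub _ b.coe_nonneg, ← ofReal_inv_of_pos ha',
    ← ofReal_mul a.coe_nonneg, ← ofReal_mul zero_le_two,
    ← ofReal_add (by positivity) zero_le_one, ← ofReal_div_of_pos hb',
    ← ofReal_pow (by positivity), ← ofReal_sub _ (by positivity)]
  congr 1
  field_simp
  ring

theorem IsPerpetuity.lintegral_sq_sub_sq_lintegral {Ω : Type*} [MeasurableSpace Ω] {P : Measure Ω}
    [IsProbabilityMeasure P] {A X : Ω → ℕ} (h : IsPerpetuity A X P) {a b : ℝ≥0}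
    (ha : ∫⁻ ω, (A ω : ℝ≥0∞) ∂P = a) (hb : ∫⁻ ω, (A ω : ℝ≥0∞) ^ 2 ∂P = b) (hb_lt : b < 1) :
    ∫⁻ ω, (X ω : ℝ≥0∞) ^ 2 ∂P - (∫⁻ ω, (X ω : ℝ≥0∞) ∂P) ^ 2 =
      ENNReal.ofReal ((b - a ^ 2) / ((1 - a) ^ 2 * (1 - b))) := by
  have hab : (a : ℝ≥0∞) ≤ b := ha ▸ hb ▸ lintegral_natCast_le_lintegral_sq A
  have ha_lt : a < 1 := (ENNReal.coe_le_coe.1 hab).trans_lt hb_lt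
  have hA₁ : ∫⁻ ω, (A ω : ℝ≥0∞) ∂P < 1 := ha ▸ ENNReal.coe_lt_one_iff.2 ha_lt
  have hA₂ : ∫⁻ ω, (A ω : ℝ≥0∞) ^ 2 ∂P < 1 := hb ▸ ENNReal.coe_lt_one_iff.2 hb_lt
  rw [eq_div_one_sub_of_eq_mul_add (h.lintegral_sq_lt_top_iff.2 hA₂).ne hA₂
    h.lintegral_sq_eq_mul_add, h.lintegral_eq_inv_one_sub hA₁, ha, hb,
    div_sub_sq_inv_one_sub ha_lt hb_lt]

section Poisson

open scoped Nat

lemma succ_mul_poissonMeasure_singleton_succ (r : ℝ≥0) (n : ℕ) :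
    ((n + 1 : ℕ) : ℝ≥0∞) * poissonMeasure r {n + 1} = r * poissonMeasure r {n} := by
  rw [poissonMeasure_singleton, poissonMeasure_singleton, ← ofReal_natCast,
    ← ofReal_coe_nnreal, ← ofReal_mul (by positivity), ← ofReal_mul (by positivity),
    Nat.factorial_succ]
  congr 1
  push_cast
  field_simp
  ring

-- This is the Stein–Chen identity.
lemma lintegral_natCast_mul_poissonMeasure (r : ℝ≥0) (f : ℕ → ℝ≥0∞) :
    ∫⁻ n, n * f n ∂poissonMeasure r = r * ∫⁻ n, f (n + 1) ∂poissonMeasure r := by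
  rw [lintegral_countable', lintegral_countable', tsum_eq_zero_add' ENNReal.summable,
    Nat.cast_zero, zero_mul, zero_mul, zero_add, ← ENNReal.tsum_mul_left]
  refine tsum_congr fun n ↦ ?_
  rw [mul_right_comm, succ_mul_poissonMeasure_singleton_succ]
  ring

lemma lintegral_natCast_poissonMeasure (r : ℝ≥0) :
    ∫⁻ n, (n : ℝ≥0∞) ∂poissonMeasure r = r := by
  simpa using lintegral_natCast_mul_poissonMeasure r 1

lemma lintegral_natCast_sq_poissonMeasure (r : ℝ≥0) :
    ∫⁻ n, (n : ℝ≥0∞) ^ 2 ∂poissonMeasure r = r * (r + 1) := by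
  simp_rw [sq, lintegral_natCast_mul_poissonMeasure r (↑), Nat.cast_add, Nat.cast_one]
  rw [lintegral_add_right _ measurable_const, lintegral_natCast_poissonMeasure, lintegral_one,
    measure_univ]

lemma hasLaw_poissonMeasure_of_measure_eq {Ω : Type*} [MeasurableSpace Ω] {P : Measure Ω}
    {A : Ω → ℕ} (hA : AEMeasurable A P) {r : ℝ≥0}
    (h : ∀ k, P {ω | A ω = k} = ENNReal.ofReal (Real.exp (-r) * r ^ k / k !)) :
    HasLaw A (poissonMeasure r) P where
  aemeasurable := hA
  map_eq := Measure.ext_of_singleton fun k ↦ by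
    rw [Measure.map_apply_of_aemeasurable hA (measurableSet_singleton k),
      poissonMeasure_singleton, ← h k]
    rfl

end Poisson

lemma lt_sqrt_five_sub_one_div_two_iff {x : ℝ} (hx : 0 ≤ x) :
    x < (Real.sqrt 5 - 1) / 2 ↔ x ^ 2 + x < 1 := calc
  x < (Real.sqrt 5 - 1) / 2 ↔ 2 * x + 1 < Real.sqrt 5 := by constructor <;> intro <;> linarith
  _ ↔ (2 * x + 1) ^ 2 < 5 := Real.lt_sqrt (by positivity)
  _ ↔ x ^ 2 + x < 1 := by constructor <;> intro <;> linarith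

theorem stmt_5 {Ω : Type*} [MeasurableSpace Ω] {P : Measure Ω} [IsProbabilityMeasure P]
    {A X : Ω → ℕ} (hA : Measurable A) (hX : Measurable X)
    (hAX : IndepFun A X P)
    (h0 : 0 < P {ω | A ω = 0})
    (hfix : Measure.map X P = Measure.map (fun ω => A ω * X ω + 1) P)
    (lam : ℝ) (hlam : 0 < lam)
    (hpois : ∀ k : ℕ, P {ω | A ω = k} =
      ENNReal.ofReal (Real.exp (-lam) * lam ^ k / (Nat.factorial k))) :
    (lam < (Real.sqrt 5 - 1) / 2 ↔ lam ^ 2 + lam < 1) ∧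
    ((∫⁻ ω, (X ω : ℝ≥0∞) ^ 2 ∂P) < ⊤ ↔ lam < (Real.sqrt 5 - 1) / 2) ∧
    (lam < (Real.sqrt 5 - 1) / 2 →
      (∫⁻ ω, (X ω : ℝ≥0∞) ^ 2 ∂P) - (∫⁻ ω, (X ω : ℝ≥0∞) ∂P) ^ 2 =
        ENNReal.ofReal (-lam / ((lam - 1) ^ 2 * (lam ^ 2 + lam - 1)))) := by
  have hperp : IsPerpetuity A X P :=
    ⟨hA.aemeasurable, hAX, hX.aemeasurable, by fun_prop, hfix⟩
  lift lam to ℝ≥0 using hlam.le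
  have hlaw : HasLaw A (poissonMeasure lam) P :=
    hasLaw_poissonMeasure_of_measure_eq hA.aemeasurable hpois
  have hA₁ : ∫⁻ ω, (A ω : ℝ≥0∞) ∂P = lam := by
    rw [hlaw.lintegral_comp (f := (↑)) .of_discrete, lintegral_natCast_poissonMeasure]
  have hA₂ : ∫⁻ ω, (A ω : ℝ≥0∞) ^ 2 ∂P = (lam ^ 2 + lam : ℝ≥0) := by
    rw [hlaw.lintegral_comp (f := fun n ↦ (n : ℝ≥0∞) ^ 2) .of_discrete,
      lintegral_natCast_sq_poissonMeasure]
    push_cast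
    ring
  have hgolden := lt_sqrt_five_sub_one_div_two_iff lam.coe_nonneg
  have hA₂_lt : ∫⁻ ω, (A ω : ℝ≥0∞) ^ 2 ∂P < 1 ↔ (lam : ℝ) ^ 2 + lam < 1 := by
    rw [hA₂]
    norm_cast
  refine ⟨hgolden, hperp.lintegral_sq_lt_top_iff.trans (hA₂_lt.trans hgolden.symm), fun h ↦ ?_⟩
  rw [hperp.lintegral_sq_sub_sq_lintegral hA₁ hA₂ (mod_cast hgolden.1 h), ← neg_div_neg_eq]
  push_cast
  ring_nf
end

section
/- Suppose A has the binomial distribution with parameters n ≥ 1 and 0 < p < 1, i.e., ℙ[A = k] = C(n,k) p^k (1−p)^{n−k} for 0 ≤ k ≤ n. Then E[X] < ∞ if and only if n·p < 1 (which always holds when n = 1), and in that case E[X] = 1 / (1 − n·p). -/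
open MeasureTheory ProbabilityTheory ENNReal

/-!
Put `a = E[A]`. Taking expectations in `X =_d A X + 1` gives `E[X] = a E[X] + 1`, and iterating this
gives `E[X] ≥ ∑ aⁱ`. Equality is not immediate because `E[X] = ∞` also solves the equation, so for
the upper bound we truncate: for a level `M`, Jensen's inequality for the concave function
`min · M` yields `E[min(sX, M)] ≤ s + E[min(saX, M)]`. Iterating from `s = 1` bounds
`E[min(X, M)]` by `∑_{i < k} aⁱ + E[min(aᵏX, M)]`, and if `a < 1` the last term vanishes as
`k → ∞` by dominated convergence. Hence `E[X] = ∑ aⁱ = (1 - a)⁻¹` in `[0, ∞]`, whatever the law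
of `A`; a binomial `A` has `a = np`.
-/

open Filter Finset Topology

theorem inv_one_sub_le_of_mul_add_one_le {a m : ℝ≥0∞} (h : a * m + 1 ≤ m) : (1 - a)⁻¹ ≤ m := by
  rw [← ENNReal.tsum_geometric]
  refine ENNReal.tsum_le_of_sum_range_le fun k ↦ ?_
  induction k with
  | zero => simp
  | succ k ih =>
    calc ∑ i ∈ range (k + 1), a ^ i = a * ∑ i ∈ range k, a ^ i + 1 := by
          simp only [sum_range_succ', pow_succ', mul_sum, pow_zero]
      _ ≤ a * m + 1 := by gcongr
      _ ≤ m := h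

theorem measure_le_of_forall_singleton_le {α : Type*} [Countable α] [MeasurableSpace α]
    [MeasurableSingletonClass α] {μ ν : Measure α} (h : ∀ a, μ {a} ≤ ν {a}) : μ ≤ ν := by
  refine Measure.le_iff.2 fun s hs ↦ ?_
  rw [← μ.tsum_indicator_apply_singleton s hs, ← ν.tsum_indicator_apply_singleton s hs]
  exact ENNReal.tsum_le_tsum fun a ↦ Set.indicator_le_indicator (h a)

section Truncation

variable {Ω : Type*} [MeasurableSpace Ω] {P : Measure Ω} {A X Y : Ω → ℝ≥0∞}

theorem lintegral_eq_iSup_lintegral_min_natCast (hX : AEMeasurable X P) :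
    ∫⁻ ω, X ω ∂P = ⨆ M : ℕ, ∫⁻ ω, min (X ω) M ∂P := by
  rw [← lintegral_iSup' (fun M ↦ hX.min aemeasurable_const)
    (ae_of_all _ fun ω M N hMN ↦ min_le_min_left _ (Nat.cast_le.2 hMN))]
  refine lintegral_congr fun ω ↦ ?_
  rw [← inf_iSup_eq, ENNReal.iSup_natCast, inf_top_eq]

theorem tendsto_lintegral_min_pow_mul_zero [IsFiniteMeasure P] (hX : AEMeasurable X P)
    (hX_top : ∀ᵐ ω ∂P, X ω ≠ ⊤) {a M : ℝ≥0∞} (ha : a < 1) (hM : M ≠ ⊤) :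
    Tendsto (fun k : ℕ ↦ ∫⁻ ω, min (a ^ k * X ω) M ∂P) atTop (𝓝 0) := by
  have hlim : ∀ᵐ ω ∂P, Tendsto (fun k : ℕ ↦ min (a ^ k * X ω) M) atTop (𝓝 0) := by
    filter_upwards [hX_top] with ω hω
    have hpow : Tendsto (fun k : ℕ ↦ a ^ k * X ω) atTop (𝓝 0) := by
      simpa using ENNReal.Tendsto.mul_const
        (ENNReal.tendsto_pow_atTop_nhds_zero_of_lt_one ha) (Or.inr hω)
    simpa using hpow.min (tendsto_const_nhds (x := M))
  simpa using tendsto_lintegral_of_dominated_convergence' (fun _ ↦ M)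
    (fun k ↦ (hX.const_mul (a ^ k)).min aemeasurable_const)
    (fun k ↦ ae_of_all _ fun ω ↦ min_le_right _ _)
    (by simpa using ENNReal.mul_ne_top hM (measure_ne_top P _)) hlim

-- Jensen's inequality for `min · M`, conditionally on `Y`.
theorem lintegral_min_mul_le_of_indepFun [IsProbabilityMeasure P] (hA : AEMeasurable A P)
    (hY : AEMeasurable Y P) (hAY : IndepFun A Y P) (M : ℝ≥0∞) :
    ∫⁻ ω, min (A ω * Y ω) M ∂P ≤ ∫⁻ ω, min ((∫⁻ ω', A ω' ∂P) * Y ω) M ∂P := by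
  have := Measure.isProbabilityMeasure_map hA
  have hlaw := (indepFun_iff_map_prod_eq_prod_map_map hA hY).1 hAY
  have hmin : Measurable fun z : ℝ≥0∞ × ℝ≥0∞ ↦ min (z.1 * z.2) M := by fun_prop
  calc ∫⁻ ω, min (A ω * Y ω) M ∂P
      = ∫⁻ z, min (z.1 * z.2) M ∂(P.map A).prod (P.map Y) := by
        rw [← hlaw, lintegral_map' hmin.aemeasurable (hA.prodMk hY)]
    _ = ∫⁻ y, ∫⁻ x, min (x * y) M ∂P.map A ∂P.map Y := lintegral_prod_symm' _ hmin
    _ ≤ ∫⁻ y, min ((∫⁻ x, x ∂P.map A) * y) M ∂P.map Y := by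
        refine lintegral_mono fun y ↦ le_min ?_ ?_
        · rw [← lintegral_mul_const y measurable_id']
          exact lintegral_mono fun x ↦ min_le_left _ _
        · simpa using lintegral_mono (μ := P.map A) fun x ↦ min_le_right (x * y) M
    _ = ∫⁻ ω, min ((∫⁻ ω', A ω' ∂P) * Y ω) M ∂P := by
        rw [lintegral_map' (by fun_prop) hY, lintegral_map' aemeasurable_id' hA]

end Truncation

section FixedPoint

variable {Ω : Type*} [MeasurableSpace Ω] {P : Measure Ω} [IsProbabilityMeasure P]
  {A X : Ω → ℝ≥0∞}

theorem lintegral_eq_lintegral_mul_add_one (hA : AEMeasurable A P) (hAX : IndepFun A X P)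
    (hfix : IdentDistrib X (fun ω ↦ A ω * X ω + 1) P P) :
    ∫⁻ ω, X ω ∂P = (∫⁻ ω, A ω ∂P) * ∫⁻ ω, X ω ∂P + 1 := by
  calc ∫⁻ ω, X ω ∂P = ∫⁻ ω, (A ω * X ω + 1) ∂P := hfix.lintegral_eq
    _ = ∫⁻ ω, A ω * X ω ∂P + 1 := by simp [lintegral_add_right]
    _ = (∫⁻ ω, A ω ∂P) * ∫⁻ ω, X ω ∂P + 1 := by
        rw [lintegral_mul_eq_lintegral_mul_lintegral_of_indepFun'' hA hfix.aemeasurable_fst hAX]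

theorem lintegral_min_mul_le_add (hA : AEMeasurable A P) (hAX : IndepFun A X P)
    (hfix : IdentDistrib X (fun ω ↦ A ω * X ω + 1) P P) (s M : ℝ≥0∞) :
    ∫⁻ ω, min (s * X ω) M ∂P ≤ s + ∫⁻ ω, min (s * (∫⁻ ω', A ω' ∂P) * X ω) M ∂P := by
  have hX := hfix.aemeasurable_fst
  have hAsX : IndepFun A (fun ω ↦ s * X ω) P :=
    hAX.comp measurable_id (measurable_const_mul s)
  calc ∫⁻ ω, min (s * X ω) M ∂P
      = ∫⁻ ω, min (s * (A ω * X ω + 1)) M ∂P :=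
        (hfix.comp (u := fun x ↦ min (s * x) M) (by fun_prop)).lintegral_eq
    _ ≤ ∫⁻ ω, (s + min (A ω * (s * X ω)) M) ∂P := by
        refine lintegral_mono fun ω ↦ ?_
        rw [← min_add_add_left]
        exact min_le_min (le_of_eq (by ring)) le_add_self
    _ = s + ∫⁻ ω, min (A ω * (s * X ω)) M ∂P := by simp [lintegral_add_left]
    _ ≤ s + ∫⁻ ω, min ((∫⁻ ω', A ω' ∂P) * (s * X ω)) M ∂P := by
        gcongr s + ?_
        exact lintegral_min_mul_le_of_indepFun hA (hX.const_mul s) hAsX M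
    _ = s + ∫⁻ ω, min (s * (∫⁻ ω', A ω' ∂P) * X ω) M ∂P := by
        simp only [mul_left_comm, mul_assoc]

theorem lintegral_min_le_sum_pow_add (hA : AEMeasurable A P) (hAX : IndepFun A X P)
    (hfix : IdentDistrib X (fun ω ↦ A ω * X ω + 1) P P) (M : ℝ≥0∞) (k : ℕ) :
    ∫⁻ ω, min (X ω) M ∂P ≤ ∑ i ∈ range k, (∫⁻ ω, A ω ∂P) ^ i +
      ∫⁻ ω, min ((∫⁻ ω', A ω' ∂P) ^ k * X ω) M ∂P := by
  induction k with
  | zero => simp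
  | succ k ih =>
    rw [sum_range_succ, pow_succ, add_assoc]
    exact ih.trans (add_le_add_right (lintegral_min_mul_le_add hA hAX hfix _ M) _)

theorem lintegral_le_inv_one_sub (hA : AEMeasurable A P) (hAX : IndepFun A X P)
    (hX_top : ∀ᵐ ω ∂P, X ω ≠ ⊤) (hfix : IdentDistrib X (fun ω ↦ A ω * X ω + 1) P P) :
    ∫⁻ ω, X ω ∂P ≤ (1 - ∫⁻ ω, A ω ∂P)⁻¹ := by
  obtain ha | ha := le_or_gt 1 (∫⁻ ω, A ω ∂P)
  · simp [tsub_eq_zero_of_le ha]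
  have hX := hfix.aemeasurable_fst
  rw [lintegral_eq_iSup_lintegral_min_natCast hX]
  refine iSup_le fun M ↦ ?_
  have hlim := (ENNReal.tendsto_nat_tsum fun i ↦ (∫⁻ ω, A ω ∂P) ^ i).add
    (tendsto_lintegral_min_pow_mul_zero hX hX_top ha (ENNReal.natCast_ne_top M))
  rw [ENNReal.tsum_geometric, add_zero] at hlim
  exact ge_of_tendsto' hlim (lintegral_min_le_sum_pow_add hA hAX hfix M)

theorem stmt_6_general (hA : AEMeasurable A P) (hAX : IndepFun A X P)
    (hX_top : ∀ᵐ ω ∂P, X ω ≠ ⊤) (hfix : IdentDistrib X (fun ω ↦ A ω * X ω + 1) P P) :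
    ∫⁻ ω, X ω ∂P = (1 - ∫⁻ ω, A ω ∂P)⁻¹ :=
  (lintegral_le_inv_one_sub hA hAX hX_top hfix).antisymm <|
    inv_one_sub_le_of_mul_add_one_le (lintegral_eq_lintegral_mul_add_one hA hAX hfix).ge

end FixedPoint

section Binomial

theorem lintegral_natCast_binomial (n : ℕ) (p : unitInterval) :
    ∫⁻ k, (k : ℝ≥0∞) ∂binomial n p = ENNReal.ofReal (n * p) := by
  have hbernstein : ∑ k ∈ Iic n, (n.choose k * (p : ℝ) ^ k * (1 - p) ^ (n - k)) • (k : ℝ) =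
      n * p := by
    have h := congrArg (Polynomial.eval (p : ℝ)) (bernsteinPolynomial.sum_smul ℝ n)
    simpa [Polynomial.eval_finsetSum, bernsteinPolynomial, Nat.range_succ_eq_Iic, mul_comm]
      using h
  rw [← hbernstein, ← integral_binomial,
    ofReal_integral_eq_lintegral_ofReal (integrable_binomial _) (ae_of_all _ Nat.cast_nonneg)]
  simp

-- The prescribed masses already sum to `1`, so they leave none for the values above `n`.
theorem eq_binomial_of_forall_singleton_eq {μ : Measure ℕ} [IsProbabilityMeasure μ] {n : ℕ}
    {p : unitInterval}
    (hμ : ∀ k ≤ n, μ {k} = ENNReal.ofReal (n.choose k * p ^ k * (1 - p) ^ (n - k))) :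
    μ = binomial n p := by
  refine (Measure.eq_of_le_of_isProbabilityMeasure
    (measure_le_of_forall_singleton_le fun k ↦ ?_)).symm
  obtain hk | hk := le_or_gt k n
  · rw [binomial_singleton, hμ k hk]
  · simp [binomial_singleton, Nat.choose_eq_zero_of_lt hk]

end Binomial

theorem stmt_6 {Ω : Type*} [MeasurableSpace Ω] {P : Measure Ω} [IsProbabilityMeasure P]
    {A X : Ω → ℕ} (hA : Measurable A) (hX : Measurable X)
    (hAX : IndepFun A X P)
    (h0 : 0 < P {ω | A ω = 0})
    (hfix : Measure.map X P = Measure.map (fun ω => A ω * X ω + 1) P)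
    (n : ℕ) (hn : 1 ≤ n) (p : ℝ) (hp0 : 0 < p) (hp1 : p < 1)
    (hbin : ∀ k : ℕ, k ≤ n → P {ω | A ω = k} =
      ENNReal.ofReal ((n.choose k : ℝ) * p ^ k * (1 - p) ^ (n - k))) :
    ((∫⁻ ω, (X ω : ℝ≥0∞) ∂P) < ⊤ ↔ (n : ℝ) * p < 1) ∧
    (n = 1 → (n : ℝ) * p < 1) ∧
    ((n : ℝ) * p < 1 → ∫⁻ ω, (X ω : ℝ≥0∞) ∂P = ENNReal.ofReal (1 / (1 - n * p))) := by
  have hlaw : HasLaw A (binomial n ⟨p, hp0.le, hp1.le⟩) P := by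
    have := Measure.isProbabilityMeasure_map (μ := P) hA.aemeasurable
    refine ⟨hA.aemeasurable, eq_binomial_of_forall_singleton_eq fun k hk ↦ ?_⟩
    rw [Measure.map_apply hA (measurableSet_singleton k)]
    exact hbin k hk
  have hEA : ∫⁻ ω, (A ω : ℝ≥0∞) ∂P = ENNReal.ofReal (n * p) := by
    rw [hlaw.lintegral_comp (f := Nat.cast) (by fun_prop), lintegral_natCast_binomial]
  have hEX : ∫⁻ ω, (X ω : ℝ≥0∞) ∂P = (1 - ENNReal.ofReal (n * p))⁻¹ := by
    rw [← hEA]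
    have hfix' : IdentDistrib X (fun ω ↦ A ω * X ω + 1) P P := ⟨by fun_prop, by fun_prop, hfix⟩
    refine stmt_6_general (by fun_prop) (hAX.comp .of_discrete .of_discrete) (by simp) ?_
    simpa [Function.comp_def] using hfix'.comp (u := ((↑) : ℕ → ℝ≥0∞)) .of_discrete
  rw [hEX]
  refine ⟨by rw [ENNReal.inv_lt_top, tsub_pos_iff_lt, ENNReal.ofReal_lt_one], ?_, fun h ↦ ?_⟩
  · rintro rfl
    simpa using hp1
  · rw [one_div, ENNReal.ofReal_inv_of_pos (sub_pos.2 h), ENNReal.ofReal_sub 1 (by positivity),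
      ENNReal.ofReal_one]
end
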